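/- For every positive integer n, the iterated improper integral I_n = ∫_{-∞}^{∞} ds₁ ∫_{-∞}^{s₁} ds₂ ⋯ ∫_{-∞}^{s_{2n-1}} ds_{2n} cos(s₁² − s₂²)·cos(s₃² − s₄²)⋯cos(s_{2n-1}² − s_{2n}²) converges and equals (2/n!)·(π/4)ⁿ. -/

import Mathlib

open Real MeasureTheory Filter Topology
open scoped InnerProductSpace ComplexConjugate
open Finset.HasAntidiagonal (antidiagonal)

/-!
Since `cos (u² - v²)` is the inner product of `exp (i u²)` and `exp (i v²)` in `ℂ`, the simplex
integrals are the coefficients of the Dyson series of the linear system `z' = ⟪e, w⟫`, `w' = z • e`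
driven by `e t = exp (i t²)` and started at `z = 1`, `w = 0`. The system conserves the quadratic
form `z₁ z₂ - ⟪w₁, w₂⟫`. For an even `e`, reflection in the origin relates the solutions started
at `-T` and at `T`, and comparing the values of the form on them expresses the coefficients on
`[-T, T]` through products of those on `[0, T]`.

The coefficients `Zₙ` on `[0, t]` converge as `t → ∞`, by integration by parts. To find the limit,
average `Zₙ (r u)` against the weight `exp (-u²)`: in the rotating frame `exp (-i t²) w`, one more
integration by parts shows that the average `Gₙ` satisfies `Gₙ₊₁' = r / (2 (1 + r⁴)) Gₙ`. Hence
`Gₙ = √π (arctan (r²) / 4)ⁿ / n!`, and letting `r → ∞` gives `Zₙ → (π / 8)ⁿ / n!`. The binomial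
theorem then sums the products.
-/

section GramKernel

variable {E : Type*} [NormedAddCommGroup E] [InnerProductSpace ℝ E] {e : ℝ → E}

/-- The iterated integral of `∏ ⟪e s₂ₖ₋₁, e s₂ₖ⟫` over `a ≤ s₂ₙ ≤ ⋯ ≤ s₁ ≤ t`, with the integrals in
`s₂ₖ` taken in `E`. It is the term of order `2n` of the Dyson series of the linear system
`z' = ⟪e, w⟫`, `w' = z • e` with `z a = 1` and `w a = 0`. -/
noncomputable def evenDyson (e : ℝ → E) (a : ℝ) : ℕ → ℝ → ℝ
  | 0, _ => 1
  | n + 1, t => ∫ u in a..t, ⟪e u, ∫ v in a..u, evenDyson e a n v • e v⟫_ℝ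

/-- The term of order `2n + 1` of the Dyson series of the same system, that is, the coefficient of
its `E`-valued component. -/
noncomputable def oddDyson (e : ℝ → E) (a : ℝ) (n : ℕ) (t : ℝ) : E :=
  ∫ v in a..t, evenDyson e a n v • e v

theorem evenDyson_zero (e : ℝ → E) (a t : ℝ) : evenDyson e a 0 t = 1 := rfl

theorem evenDyson_succ (e : ℝ → E) (a : ℝ) (n : ℕ) (t : ℝ) :
    evenDyson e a (n + 1) t = ∫ u in a..t, ⟪e u, oddDyson e a n u⟫_ℝ := rfl

theorem evenDyson_succ_self (e : ℝ → E) (a : ℝ) (n : ℕ) : evenDyson e a (n + 1) a = 0 :=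
  intervalIntegral.integral_same

theorem oddDyson_self (e : ℝ → E) (a : ℝ) (n : ℕ) : oddDyson e a n a = 0 :=
  intervalIntegral.integral_same

theorem continuous_oddDyson_of_continuous_evenDyson (he : Continuous e) {a : ℝ} {n : ℕ}
    (h : Continuous (evenDyson e a n)) : Continuous (oddDyson e a n) :=
  intervalIntegral.continuous_primitive (fun _ _ => (h.smul he).intervalIntegrable _ _) a

theorem continuous_evenDyson (he : Continuous e) (a : ℝ) (n : ℕ) :
    Continuous (evenDyson e a n) := by
  induction n with
  | zero => exact continuous_const
  | succ n ih =>
    exact intervalIntegral.continuous_primitive (fun _ _ =>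
      (he.inner (continuous_oddDyson_of_continuous_evenDyson he ih)).intervalIntegrable _ _) a

theorem continuous_oddDyson (he : Continuous e) (a : ℝ) (n : ℕ) : Continuous (oddDyson e a n) :=
  continuous_oddDyson_of_continuous_evenDyson he (continuous_evenDyson he a n)

theorem hasDerivAt_evenDyson_succ (he : Continuous e) (a : ℝ) (n : ℕ) (t : ℝ) :
    HasDerivAt (evenDyson e a (n + 1)) ⟪e t, oddDyson e a n t⟫_ℝ t :=
  ((he.inner (continuous_oddDyson he a n)).integral_hasStrictDerivAt a t).hasDerivAt

theorem differentiable_evenDyson (he : Continuous e) (a : ℝ) (n : ℕ) :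
    Differentiable ℝ (evenDyson e a n) := by
  cases n with
  | zero => exact differentiable_const 1
  | succ n => exact fun t => (hasDerivAt_evenDyson_succ he a n t).differentiableAt

theorem deriv_evenDyson_zero (e : ℝ → E) (a t : ℝ) : deriv (evenDyson e a 0) t = 0 :=
  deriv_const t 1

theorem norm_oddDyson_le {a C : ℝ} {n : ℕ} (he : ∀ t, ‖e t‖ ≤ 1)
    (hC : ∀ t, |evenDyson e a n t| ≤ C) (t : ℝ) : ‖oddDyson e a n t‖ ≤ C * |t - a| := by
  refine intervalIntegral.norm_integral_le_of_norm_le_const fun v _ => ?_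
  rw [norm_smul, Real.norm_eq_abs]
  exact (mul_le_of_le_one_right (abs_nonneg _) (he v)).trans (hC v)

section Even

theorem intervalIntegral_neg_neg (f : ℝ → E) (a b : ℝ) :
    ∫ v in -a..-b, f v = -∫ v in a..b, f (-v) := by
  rw [intervalIntegral.integral_comp_neg, intervalIntegral.integral_symm]

theorem oddDyson_neg_neg_of_evenDyson (he : e.Even) {a : ℝ} {n : ℕ}
    (h : ∀ t, evenDyson e (-a) n (-t) = evenDyson e a n t) (t : ℝ) :
    oddDyson e (-a) n (-t) = -oddDyson e a n t := by
  simp only [oddDyson, intervalIntegral_neg_neg, h, he _]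

theorem evenDyson_neg_neg (he : e.Even) (a : ℝ) (n : ℕ) (t : ℝ) :
    evenDyson e (-a) n (-t) = evenDyson e a n t := by
  induction n generalizing t with
  | zero => rfl
  | succ n ih =>
    simp only [evenDyson_succ, intervalIntegral_neg_neg, oddDyson_neg_neg_of_evenDyson he ih, he _,
      inner_neg_right, intervalIntegral.integral_neg, neg_neg]

theorem oddDyson_neg_neg (he : e.Even) (a : ℝ) (n : ℕ) (t : ℝ) :
    oddDyson e (-a) n (-t) = -oddDyson e a n t :=
  oddDyson_neg_neg_of_evenDyson he (evenDyson_neg_neg he a n) t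

end Even

variable [CompleteSpace E]

theorem hasDerivAt_oddDyson (he : Continuous e) (a : ℝ) (n : ℕ) (t : ℝ) :
    HasDerivAt (oddDyson e a n) (evenDyson e a n t • e t) t :=
  (((continuous_evenDyson he a n).smul he).integral_hasStrictDerivAt a t).hasDerivAt

/-- The coefficient of order `2(n + 1)` of the quadratic form `z₁ z₂ - ⟪w₁, w₂⟫`, which is conserved
by the linear system of `evenDyson`, evaluated at time `t` on the solutions started at `a` and
`b`. -/
noncomputable def dysonForm (e : ℝ → E) (a b : ℝ) (n : ℕ) (t : ℝ) : ℝ :=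
  ∑ p ∈ antidiagonal (n + 1), evenDyson e a p.1 t * evenDyson e b p.2 t -
    ∑ p ∈ antidiagonal n, ⟪oddDyson e a p.1 t, oddDyson e b p.2 t⟫_ℝ

theorem hasDerivAt_dysonForm (he : Continuous e) (a b : ℝ) (n : ℕ) (t : ℝ) :
    HasDerivAt (dysonForm e a b n) 0 t := by
  have hz (c : ℝ) (k : ℕ) := (differentiable_evenDyson he c k t).hasDerivAt
  have hw (c : ℝ) (k : ℕ) := hasDerivAt_oddDyson he c k t
  have hsub := (HasDerivAt.fun_sum fun p (_ : p ∈ antidiagonal (n + 1)) =>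
    (hz a p.1).mul (hz b p.2)).sub
    (HasDerivAt.fun_sum fun p (_ : p ∈ antidiagonal n) => (hw a p.1).inner ℝ (hw b p.2))
  refine hsub.congr_deriv ?_
  rw [Finset.sum_add_distrib, Finset.Nat.sum_antidiagonal_succ, Finset.Nat.sum_antidiagonal_succ'
    (f := fun p => evenDyson e a p.1 t * deriv (evenDyson e b p.2) t)]
  simp only [deriv_evenDyson_zero, (hasDerivAt_evenDyson_succ he _ _ t).deriv, zero_mul, mul_zero,
    zero_add, ← Finset.sum_add_distrib, ← Finset.sum_sub_distrib]
  refine Finset.sum_eq_zero fun p _ => ?_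
  rw [real_inner_smul_left, real_inner_smul_right, real_inner_comm (e t)]
  ring

theorem dysonForm_eq (he : Continuous e) (a b : ℝ) (n : ℕ) (t t' : ℝ) :
    dysonForm e a b n t = dysonForm e a b n t' :=
  is_const_of_deriv_eq_zero (fun t => (hasDerivAt_dysonForm he a b n t).differentiableAt)
    (fun t => (hasDerivAt_dysonForm he a b n t).deriv) t t'

theorem dysonForm_eq_evenDyson (he : Continuous e) (a b : ℝ) (n : ℕ) (t : ℝ) :
    dysonForm e a b n t = evenDyson e a (n + 1) b := by
  rw [dysonForm_eq he a b n t b, dysonForm, Finset.Nat.sum_antidiagonal_succ']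
  simp [evenDyson_zero, evenDyson_succ_self, oddDyson_self]

omit [CompleteSpace E] in
theorem dysonForm_comm (e : ℝ → E) (a b : ℝ) (n : ℕ) (t : ℝ) :
    dysonForm e a b n t = dysonForm e b a n t := by
  unfold dysonForm
  congr 1
  · rw [← Finset.Nat.sum_antidiagonal_swap]
    simp only [Prod.fst_swap, Prod.snd_swap, mul_comm]
  · rw [← Finset.Nat.sum_antidiagonal_swap]
    simp only [Prod.fst_swap, Prod.snd_swap, real_inner_comm]

theorem evenDyson_comm (he : Continuous e) (a b : ℝ) (n : ℕ) :
    evenDyson e a n b = evenDyson e b n a := by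
  cases n with
  | zero => rfl
  | succ n => rw [← dysonForm_eq_evenDyson he a b n 0, dysonForm_comm, dysonForm_eq_evenDyson he]

theorem evenDyson_neg_succ (he : Continuous e) (heven : e.Even) (n : ℕ) (T : ℝ) :
    evenDyson e (-T) (n + 1) T =
      2 * ∑ p ∈ antidiagonal (n + 1), evenDyson e 0 p.1 T * evenDyson e 0 p.2 T := by
  have hz (k : ℕ) : evenDyson e (-T) k 0 = evenDyson e T k 0 := by
    simpa using evenDyson_neg_neg heven T k 0
  have hw (k : ℕ) : oddDyson e (-T) k 0 = -oddDyson e T k 0 := by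
    simpa using oddDyson_neg_neg heven T k 0
  have hsum : dysonForm e (-T) T n 0 = evenDyson e (-T) (n + 1) T :=
    dysonForm_eq_evenDyson he _ _ _ _
  have hdiff : dysonForm e T T n 0 = 0 := by
    rw [dysonForm_eq_evenDyson he, evenDyson_succ_self]
  simp only [dysonForm, hz, hw, inner_neg_left, Finset.sum_neg_distrib, sub_neg_eq_add,
    evenDyson_comm he T 0] at hsum hdiff
  linarith

end GramKernel

section Asymptotics

open Asymptotics

/-- The signal `exp (i t²)` of linearly increasing frequency, viewed as a curve in `ℂ`: the cosine
kernel is its Gram kernel. -/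
noncomputable def chirp (t : ℝ) : ℂ := Complex.exp ((t ^ 2 : ℝ) * Complex.I)

theorem continuous_chirp : Continuous chirp := by unfold chirp; fun_prop

theorem even_chirp : chirp.Even := fun t => by rw [chirp, neg_sq, chirp]

theorem norm_chirp (t : ℝ) : ‖chirp t‖ = 1 := Complex.norm_exp_ofReal_mul_I (t ^ 2)

theorem conj_chirp_mul_chirp (t : ℝ) : conj (chirp t) * chirp t = 1 := by
  rw [Complex.conj_mul', norm_chirp, Complex.ofReal_one, one_pow]

theorem inner_chirp_chirp (u v : ℝ) : ⟪chirp u, chirp v⟫_ℝ = cos (u ^ 2 - v ^ 2) := by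
  rw [Complex.inner, chirp, chirp, ← Complex.exp_conj, ← Complex.exp_add, map_mul, Complex.conj_I,
    Complex.conj_ofReal, mul_neg, ← sub_eq_add_neg, ← sub_mul, ← Complex.ofReal_sub,
    Complex.exp_ofReal_mul_I_re, ← cos_neg, neg_sub]

theorem hasDerivAt_chirp (t : ℝ) : HasDerivAt chirp (2 * t * Complex.I * chirp t) t := by
  refine (((hasDerivAt_pow 2 t).ofReal_comp.mul_const Complex.I).cexp).congr_deriv ?_
  rw [chirp, mul_comm]
  push_cast
  ring

theorem isBigO_of_hasDerivAt {E : Type*} [NormedAddCommGroup E] [NormedSpace ℝ E] {f f' : ℝ → E}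
    {g g' : ℝ → ℝ} (hf : ∀ᶠ t in atTop, HasDerivAt f (f' t) t)
    (hg : ∀ᶠ t in atTop, HasDerivAt g (g' t) t) (hg' : ∀ᶠ t in atTop, 0 ≤ g' t)
    (hg_top : Tendsto g atTop atTop) (h : f' =O[atTop] g') : f =O[atTop] g := by
  obtain ⟨C, hC⟩ := h.bound
  obtain ⟨t₀, ht₀⟩ := eventually_atTop.1 (((hf.and hg).and hg').and hC)
  have hsub : (fun t => f t) =O[atTop] fun t => (‖f t₀‖ - C * g t₀) + C * g t := by
    refine IsBigO.of_bound' ((eventually_ge_atTop t₀).mono fun t ht => ?_)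
    refine (image_norm_le_of_norm_deriv_right_le_deriv_boundary' (f := f) (f' := f')
      (B := fun t => (‖f t₀‖ - C * g t₀) + C * g t) (B' := fun t => C * g' t)
      (fun s hs => (ht₀ s hs.1).1.1.1.continuousAt.continuousWithinAt)
      (fun s hs => (ht₀ s hs.1).1.1.1.hasDerivWithinAt) (by simp)
      (fun s hs => ((ht₀ s hs.1).1.1.2.continuousAt.const_mul C).const_add _ |>.continuousWithinAt)
      (fun s hs => (((ht₀ s hs.1).1.1.2.const_mul C).const_add _).hasDerivWithinAt)
      (fun s hs => ?_) ⟨ht, le_rfl⟩).trans (le_abs_self _)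
    simpa [abs_of_nonneg (ht₀ s hs.1).1.2] using (ht₀ s hs.1).2
  refine hsub.trans (.add ?_ (isBigO_const_mul_self C g atTop))
  exact (isLittleO_const_left.2 (.inr (tendsto_abs_atTop_atTop.comp hg_top))).isBigO

/-- Integration by parts, in which `-(I / (2 t)) chirp t` plays the role of the antiderivative of
`chirp`. -/
theorem hasDerivAt_add_smul_chirp {z : ℝ → ℝ} {w : ℝ → ℂ} {z' t : ℝ} (ht : t ≠ 0)
    (hz : HasDerivAt z z' t) (hw : HasDerivAt w (z t • chirp t) t) :
    HasDerivAt (fun t => w t + (t⁻¹ * z t) • (Complex.I / 2 * chirp t))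
      ((t⁻¹ * (z' - t⁻¹ * z t)) • (Complex.I / 2 * chirp t)) t := by
  have hchirp : HasDerivAt (fun t => Complex.I / 2 * chirp t) (-t • chirp t) t := by
    refine ((hasDerivAt_chirp t).const_mul (Complex.I / 2)).congr_deriv ?_
    rw [Complex.real_smul, Complex.ofReal_neg]
    linear_combination (t * chirp t) * Complex.I_sq
  refine (hw.add (((hasDerivAt_inv ht).fun_mul hz).smul hchirp)).congr_deriv ?_
  match_scalars <;> field_simp <;> ring

theorem isBigO_sqrt_of_hasDerivAt_smul_chirp {z z' : ℝ → ℝ} {w : ℝ → ℂ}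
    (hz : ∀ t, HasDerivAt z (z' t) t) (hw : ∀ t, HasDerivAt w (z t • chirp t) t)
    (hz_bdd : z =O[atTop] fun _ => (1 : ℝ)) (hz' : z' =O[atTop] sqrt) : w =O[atTop] sqrt := by
  have hchirp (r : ℝ → ℝ) : (fun t => r t • (Complex.I / 2 * chirp t)) =O[atTop] r :=
    isBigO_of_le _ fun t => by
      rw [norm_smul, norm_mul, norm_chirp]
      exact mul_le_of_le_one_right (norm_nonneg _) (by norm_num)
  have hone : (fun _ => 1 : ℝ → ℝ) =O[atTop] sqrt :=
    (isLittleO_const_left.2 (.inr (tendsto_abs_atTop_atTop.comp tendsto_sqrt_atTop))).isBigO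
  have hinv_mul : (fun t => t⁻¹ * z t) =O[atTop] sqrt := by
    simpa using ((tendsto_inv_atTop_zero.isBigO_one ℝ).mul hz_bdd).trans (by simpa using hone)
  have hsqrt : ∀ᶠ t in atTop, HasDerivAt sqrt (2⁻¹ * (t⁻¹ * √t)) t := by
    filter_upwards [eventually_gt_atTop 0] with t ht
    refine (hasDerivAt_sqrt ht.ne').congr_deriv ?_
    rw [inv_mul_eq_div t, sqrt_div_self, one_div, mul_inv]
  have hparts : (fun t => w t + (t⁻¹ * z t) • (Complex.I / 2 * chirp t)) =O[atTop] sqrt := by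
    refine isBigO_of_hasDerivAt ((eventually_ne_atTop 0).mono fun t ht =>
      hasDerivAt_add_smul_chirp ht (hz t) (hw t)) hsqrt ?_ tendsto_sqrt_atTop ?_
    · filter_upwards [eventually_gt_atTop 0] with t ht
      positivity
    · exact (hchirp _).trans (((isBigO_refl _ _).mul (hz'.sub hinv_mul)).trans
        (isBigO_self_const_mul (by norm_num) _ _))
  simpa using hparts.sub ((hchirp _).trans hinv_mul)

theorem exists_tendsto_atTop_of_hasDerivAt_of_isBigO_sqrt {f x y : ℝ → ℝ}
    (hf : ∀ t, HasDerivAt f (x t) t) (hy : ∀ t, HasDerivAt y (-2 * t * x t) t)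
    (hy_sqrt : y =O[atTop] sqrt) : ∃ L, Tendsto f atTop (𝓝 L) := by
  have hderiv : ∀ t ∈ Set.Ioi (1 : ℝ),
      HasDerivAt (fun t => f t + 2⁻¹ * (t⁻¹ * y t)) (-2⁻¹ * ((t ^ 2)⁻¹ * y t)) t := fun t ht => by
    have ht0 : t ≠ 0 := (zero_lt_one.trans ht).ne'
    refine ((hf t).add (((hasDerivAt_inv ht0).fun_mul (hy t)).const_mul 2⁻¹)).congr_deriv ?_
    field_simp
    ring
  have hy_cont : Continuous y := continuous_iff_continuousAt.2 fun t => (hy t).continuousAt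
  have hint : IntegrableOn (fun t => -2⁻¹ * ((t ^ 2)⁻¹ * y t)) (Set.Ioi 1) := by
    have hcont : ContinuousOn (fun t => -2⁻¹ * ((t ^ 2)⁻¹ * y t)) (Set.Ici 1) :=
      continuousOn_const.mul (((continuousOn_pow 2).inv₀ fun t ht =>
        pow_ne_zero 2 (zero_lt_one.trans_le ht).ne').mul hy_cont.continuousOn)
    refine ((hcont.locallyIntegrableOn measurableSet_Ici).integrableOn_of_isBigO_atTop
      ((((isBigO_refl _ _).mul hy_sqrt).const_mul_left _).congr' .rfl ?_)
      (integrableAtFilter_rpow_atTop_iff (s := -3 / 2) |>.2 (by norm_num))).mono_set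
      Set.Ioi_subset_Ici_self
    filter_upwards [eventually_gt_atTop 0] with t ht
    rw [sqrt_eq_rpow, ← rpow_natCast, ← rpow_neg ht.le, ← rpow_add ht]
    norm_num
  have hcorr : Tendsto (fun t => 2⁻¹ * (t⁻¹ * y t)) atTop (𝓝 0) := by
    refine (((isBigO_refl _ _).mul hy_sqrt).const_mul_left _).trans_tendsto ?_
    simp only [inv_mul_eq_div, sqrt_div_self]
    exact tendsto_inv_atTop_zero.comp tendsto_sqrt_atTop
  have hlim := (tendsto_limUnder_of_hasDerivAt_of_integrableOn_Ioi hderiv hint).sub hcorr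
  simp only [add_sub_cancel_right] at hlim
  exact ⟨_, hlim⟩

theorem tendsto_cocompact_of_even {α : Type*} {f : ℝ → α} {l : Filter α} (hf : f.Even)
    (h : Tendsto f atTop l) : Tendsto f (cocompact ℝ) l := by
  rw [cocompact_eq_atBot_atTop, tendsto_sup]
  exact ⟨(h.comp tendsto_neg_atBot_atTop).congr hf, h⟩

theorem exists_norm_le_of_tendsto_cocompact {X E : Type*} [TopologicalSpace X]
    [SeminormedAddCommGroup E] {f : X → E} {L : E} (hf : Continuous f)
    (h : Tendsto f (cocompact X) (𝓝 L)) : ∃ C, ∀ x, ‖f x‖ ≤ C := by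
  obtain ⟨K, hK, hKL⟩ := mem_cocompact.1 (h (Metric.ball_mem_nhds L one_pos))
  obtain ⟨C, hC⟩ := ((hK.image hf).isBounded.union Metric.isBounded_ball).exists_norm_le
  refine ⟨C, fun x => hC (f x) ?_⟩
  by_cases hx : x ∈ K
  · exact .inl ⟨x, hx, rfl⟩
  · exact .inr (hKL hx)

end Asymptotics

section ChirpDyson

/-- The odd Dyson coefficient of the chirp in the rotating frame, where the forcing term of its
differential equation no longer oscillates. -/
noncomputable def rotatingDyson (n : ℕ) (t : ℝ) : ℂ := conj (chirp t) * oddDyson chirp 0 n t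

theorem norm_rotatingDyson (n : ℕ) (t : ℝ) : ‖rotatingDyson n t‖ = ‖oddDyson chirp 0 n t‖ := by
  rw [rotatingDyson, norm_mul, RCLike.norm_conj, norm_chirp, one_mul]

theorem hasDerivAt_rotatingDyson (n : ℕ) (t : ℝ) :
    HasDerivAt (rotatingDyson n)
      (-2 * t * Complex.I * rotatingDyson n t + evenDyson chirp 0 n t) t := by
  have hconj : HasDerivAt (fun t => conj (chirp t)) (conj (2 * t * Complex.I * chirp t)) t :=
    (hasDerivAt_chirp t).star
  refine (hconj.mul (hasDerivAt_oddDyson continuous_chirp 0 n t)).congr_deriv ?_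
  simp only [rotatingDyson, map_mul, Complex.conj_I, Complex.conj_ofReal, map_ofNat,
    Complex.real_smul]
  linear_combination (evenDyson chirp 0 n t : ℂ) * conj_chirp_mul_chirp t

theorem continuous_rotatingDyson (n : ℕ) : Continuous (rotatingDyson n) :=
  continuous_iff_continuousAt.2 fun t => (hasDerivAt_rotatingDyson n t).continuousAt

theorem hasDerivAt_evenDyson_chirp_succ (n : ℕ) (t : ℝ) :
    HasDerivAt (evenDyson chirp 0 (n + 1)) (rotatingDyson n t).re t := by
  refine (hasDerivAt_evenDyson_succ continuous_chirp 0 n t).congr_deriv ?_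
  rw [Complex.inner, rotatingDyson, mul_comm]

theorem even_evenDyson_chirp (n : ℕ) : (evenDyson chirp 0 n).Even := fun t => by
  simpa using evenDyson_neg_neg even_chirp 0 n t

theorem evenDyson_chirp_tendsto_and_deriv_isBigO (n : ℕ) :
    (∃ L, Tendsto (evenDyson chirp 0 n) atTop (𝓝 L)) ∧
      deriv (evenDyson chirp 0 n) =O[atTop] sqrt := by
  induction n with
  | zero =>
    have hderiv : deriv (evenDyson chirp 0 0) = 0 := funext (deriv_evenDyson_zero chirp 0)
    exact ⟨⟨1, tendsto_const_nhds⟩, hderiv ▸ Asymptotics.isBigO_zero _ _⟩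
  | succ n ih =>
    obtain ⟨⟨L, hL⟩, hderiv⟩ := ih
    have hodd : oddDyson chirp 0 n =O[atTop] sqrt :=
      isBigO_sqrt_of_hasDerivAt_smul_chirp
        (fun t => (differentiable_evenDyson continuous_chirp 0 n t).hasDerivAt)
        (hasDerivAt_oddDyson continuous_chirp 0 n) (hL.isBigO_one ℝ) hderiv
    have hrot : rotatingDyson n =O[atTop] sqrt :=
      (Asymptotics.isBigO_of_le _ fun t => (norm_rotatingDyson n t).le).trans hodd
    have him (t : ℝ) : HasDerivAt (fun t => (rotatingDyson n t).im)
        (-2 * t * (rotatingDyson n t).re) t := by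
      refine (Complex.imCLM.hasFDerivAt.comp_hasDerivAt t
        (hasDerivAt_rotatingDyson n t)).congr_deriv ?_
      simp
    constructor
    · exact exists_tendsto_atTop_of_hasDerivAt_of_isBigO_sqrt
        (hasDerivAt_evenDyson_chirp_succ n) him
        ((Asymptotics.isBigO_of_le _ fun t => Complex.abs_im_le_norm _).trans hrot)
    · rw [funext fun t => (hasDerivAt_evenDyson_chirp_succ n t).deriv]
      exact (Asymptotics.isBigO_of_le _ fun t => Complex.abs_re_le_norm _).trans hrot

theorem exists_tendsto_evenDyson_chirp (n : ℕ) :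
    ∃ L, Tendsto (evenDyson chirp 0 n) (cocompact ℝ) (𝓝 L) :=
  (evenDyson_chirp_tendsto_and_deriv_isBigO n).1.imp fun _ =>
    tendsto_cocompact_of_even (even_evenDyson_chirp n)

theorem exists_abs_evenDyson_chirp_le (n : ℕ) : ∃ C, ∀ t, |evenDyson chirp 0 n t| ≤ C :=
  (exists_tendsto_evenDyson_chirp n).elim fun _ =>
    exists_norm_le_of_tendsto_cocompact (continuous_evenDyson continuous_chirp 0 n)

end ChirpDyson

section GaussianAverage

variable {E : Type*} [NormedAddCommGroup E] [NormedSpace ℝ E]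

/-- The average of `f` against the (unnormalised) Gaussian of scale `r`. -/
noncomputable def gaussianAverage (f : ℝ → E) (r : ℝ) : E := ∫ u, exp (-u ^ 2) • f (r * u)

theorem integrable_exp_neg_sq_smul {g : ℝ → E} {B D : ℝ} (hg : Continuous g)
    (hBD : ∀ u, ‖g u‖ ≤ B + D * u ^ 2) : Integrable fun u => exp (-u ^ 2) • g u := by
  have hgauss : Integrable fun u : ℝ => exp (-1 * u ^ 2) := integrable_exp_neg_mul_sq one_pos
  have hsq : Integrable fun u : ℝ => u ^ (2 : ℝ) * exp (-1 * u ^ 2) :=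
    integrable_rpow_mul_exp_neg_mul_sq one_pos (by norm_num)
  refine ((hgauss.const_mul B).add (hsq.const_mul D)).mono' (by fun_prop) (ae_of_all _ fun u => ?_)
  rw [norm_smul, norm_of_nonneg (exp_pos _).le, Pi.add_apply, neg_one_mul, rpow_two]
  linarith [mul_le_mul_of_nonneg_left (hBD u) (exp_pos (-u ^ 2)).le]

theorem integrable_exp_neg_sq_smul_of_bounded {g : ℝ → E} {B : ℝ} (hg : Continuous g)
    (hB : ∀ u, ‖g u‖ ≤ B) : Integrable fun u => exp (-u ^ 2) • g u :=
  integrable_exp_neg_sq_smul (D := 0) hg fun u => by simpa using hB u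

theorem norm_smul_comp_mul_le {g : ℝ → E} {C : ℝ} (hg : ∀ t, ‖g t‖ ≤ C * |t|) (r u : ℝ) :
    ‖u • g (r * u)‖ ≤ C * |r| * u ^ 2 := by
  rw [norm_smul, norm_eq_abs, ← sq_abs u]
  refine (mul_le_mul_of_nonneg_left (hg _) (abs_nonneg u)).trans_eq ?_
  rw [abs_mul]
  ring

theorem integrable_exp_neg_sq_smul_smul_comp_mul {g : ℝ → E} {C : ℝ} (hg : Continuous g)
    (hC : ∀ t, ‖g t‖ ≤ C * |t|) (r : ℝ) : Integrable fun u => exp (-u ^ 2) • u • g (r * u) :=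
  integrable_exp_neg_sq_smul (B := 0) (by fun_prop) fun u => by
    simpa using norm_smul_comp_mul_le hC r u

theorem tendsto_gaussianAverage [CompleteSpace E] {f : ℝ → E} {L : E} (hf : Continuous f)
    (h : Tendsto f (cocompact ℝ) (𝓝 L)) : Tendsto (gaussianAverage f) atTop (𝓝 (√π • L)) := by
  obtain ⟨C, hC⟩ := exists_norm_le_of_tendsto_cocompact hf h
  have hgauss : Integrable fun u : ℝ => exp (-u ^ 2) := by
    simpa using integrable_exp_neg_mul_sq one_pos
  have hlim : ∫ u, exp (-u ^ 2) • L = √π • L := by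
    rw [integral_smul_const]
    simpa using congrArg (· • L) (integral_gaussian 1)
  rw [← hlim]
  refine tendsto_integral_filter_of_dominated_convergence (fun u => exp (-u ^ 2) * C)
    (.of_forall fun r => by fun_prop) (.of_forall fun r => ae_of_all _ fun u => ?_)
    (hgauss.mul_const C) ?_
  · rw [norm_smul, norm_of_nonneg (exp_pos _).le]
    exact mul_le_mul_of_nonneg_left (hC _) (exp_pos _).le
  · filter_upwards [Measure.ae_ne volume 0] with u hu
    exact (h.comp ((Homeomorph.mulRight₀ u hu).isClosedEmbedding.tendsto_cocompact.mono_left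
      atTop_le_cocompact)).const_smul _

theorem hasDerivAt_gaussianAverage {f f' : ℝ → E} {B C : ℝ} (hf : ∀ t, HasDerivAt f (f' t) t)
    (hf'_cont : Continuous f') (hB : ∀ t, ‖f t‖ ≤ B) (hC : ∀ t, ‖f' t‖ ≤ C * |t|) (r : ℝ) :
    HasDerivAt (gaussianAverage f) (∫ u, exp (-u ^ 2) • u • f' (r * u)) r := by
  have hf_cont : Continuous f := continuous_iff_continuousAt.2 fun t => (hf t).continuousAt
  have hC0 : 0 ≤ C := by simpa using (norm_nonneg _).trans (hC 1)
  have hdom : Integrable fun u : ℝ => exp (-u ^ 2) • (C * (|r| + 1) * u ^ 2) :=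
    integrable_exp_neg_sq_smul (B := 0) (by fun_prop) fun u => by
      rw [norm_of_nonneg (by positivity), zero_add]
  refine (hasDerivAt_integral_of_dominated_loc_of_deriv_le
    (F := fun s u => exp (-u ^ 2) • f (s * u))
    (F' := fun s u => exp (-u ^ 2) • u • f' (s * u)) (Metric.ball_mem_nhds r one_pos)
    (.of_forall fun s => Continuous.aestronglyMeasurable (by fun_prop))
    (integrable_exp_neg_sq_smul_of_bounded (by fun_prop) fun u => hB _)
    (Continuous.aestronglyMeasurable (by fun_prop)) (ae_of_all _ fun u s hs => ?_) hdom
    (ae_of_all _ fun u s _ => ?_)).2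
  · rw [norm_smul, norm_of_nonneg (exp_pos _).le, smul_eq_mul]
    have hs' : |s| ≤ |r| + 1 := by
      linarith [abs_sub_abs_le_abs_sub s r, (mem_ball_iff_norm.1 hs).le, norm_eq_abs (s - r)]
    refine mul_le_mul_of_nonneg_left ((norm_smul_comp_mul_le hC s u).trans ?_) (exp_pos _).le
    gcongr
  · have hmul : HasDerivAt (fun s => s * u) u s := by simpa using (hasDerivAt_id s).mul_const u
    exact ((hf (s * u)).scomp s hmul).const_smul _

/-- Integrate the derivative of `exp (-u ^ 2) • w (r * u)`. -/
theorem mul_integral_exp_neg_sq_smul {w : ℝ → ℂ} {z : ℝ → ℝ} {B C : ℝ}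
    (hw : ∀ t, HasDerivAt w (-2 * t * Complex.I * w t + z t) t) (hz : Continuous z)
    (hB : ∀ t, |z t| ≤ B) (hC : ∀ t, ‖w t‖ ≤ C * |t|) (r : ℝ) :
    2 * (1 + r ^ 2 * Complex.I) * ∫ u, exp (-u ^ 2) • u • w (r * u) =
      (r * gaussianAverage z r : ℝ) := by
  have hw_cont : Continuous w := continuous_iff_continuousAt.2 fun t => (hw t).continuousAt
  have hint_z : Integrable fun u => exp (-u ^ 2) • (z (r * u) : ℂ) :=
    integrable_exp_neg_sq_smul_of_bounded (by fun_prop) fun u =>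
      (Complex.norm_real _).trans_le (hB _)
  have hint_uw := integrable_exp_neg_sq_smul_smul_comp_mul hw_cont hC r
  have hint_w : Integrable fun u => exp (-u ^ 2) • w (r * u) := by
    have hC0 : 0 ≤ C := by simpa using (norm_nonneg _).trans (hC 1)
    refine integrable_exp_neg_sq_smul (B := C * |r|) (D := C * |r|) (by fun_prop) fun u => ?_
    have hu : |u| ≤ 1 + u ^ 2 := by nlinarith [sq_nonneg (|u| - 1), sq_abs u]
    calc ‖w (r * u)‖ ≤ C * |r| * |u| := by simpa [abs_mul, mul_assoc] using hC (r * u)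
      _ ≤ C * |r| * (1 + u ^ 2) := by gcongr
      _ = C * |r| + C * |r| * u ^ 2 := by ring
  have hderiv (u : ℝ) : HasDerivAt (fun u => exp (-u ^ 2) • w (r * u))
      (r * (exp (-u ^ 2) • (z (r * u) : ℂ)) -
        2 * (1 + r ^ 2 * Complex.I) * (exp (-u ^ 2) • u • w (r * u))) u := by
    have hexp : HasDerivAt (fun u : ℝ => exp (-u ^ 2)) (exp (-u ^ 2) * -(2 * u)) u := by
      simpa using (hasDerivAt_pow 2 u).neg.exp
    have hmul : HasDerivAt (fun u => r * u) r u := by simpa using (hasDerivAt_id u).const_mul r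
    refine (hexp.smul ((hw (r * u)).scomp u hmul)).congr_deriv ?_
    simp only [Complex.real_smul, Function.comp_apply]
    push_cast
    ring
  have hzero := integral_eq_zero_of_hasDerivAt_of_integrable hderiv
    ((hint_z.const_mul _).sub (hint_uw.const_mul _)) hint_w
  rw [integral_sub (hint_z.const_mul _) (hint_uw.const_mul _), integral_const_mul,
    integral_const_mul, sub_eq_zero] at hzero
  rw [← hzero, gaussianAverage, Complex.ofReal_mul, ← integral_complex_ofReal]
  simp only [Complex.real_smul, smul_eq_mul, Complex.ofReal_mul]

end GaussianAverage

section Limit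

theorem hasDerivAt_gaussianAverage_evenDyson_chirp_succ (n : ℕ) (r : ℝ) :
    HasDerivAt (gaussianAverage (evenDyson chirp 0 (n + 1)))
      (r / (2 * (1 + r ^ 4)) * gaussianAverage (evenDyson chirp 0 n) r) r := by
  obtain ⟨B, hB⟩ := exists_abs_evenDyson_chirp_le (n + 1)
  obtain ⟨C, hC⟩ := exists_abs_evenDyson_chirp_le n
  have hrot (t : ℝ) : ‖rotatingDyson n t‖ ≤ C * |t| := by
    simpa [norm_rotatingDyson] using norm_oddDyson_le (fun t => (norm_chirp t).le) hC t
  refine (hasDerivAt_gaussianAverage (hasDerivAt_evenDyson_chirp_succ n)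
    (Complex.continuous_re.comp (continuous_rotatingDyson n)) hB
    (fun t => (Complex.abs_re_le_norm _).trans (hrot t)) r).congr_deriv ?_
  have hre : ∫ u, exp (-u ^ 2) • u • (rotatingDyson n (r * u)).re =
      (∫ u, exp (-u ^ 2) • u • rotatingDyson n (r * u)).re := by
    rw [← Complex.reCLM_apply, ← Complex.reCLM.integral_comp_comm
      (integrable_exp_neg_sq_smul_smul_comp_mul (continuous_rotatingDyson n) hrot r)]
    simp only [map_smul, Complex.reCLM_apply]
  have hmul := mul_integral_exp_neg_sq_smul (hasDerivAt_rotatingDyson n)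
    (continuous_evenDyson continuous_chirp 0 n) hC hrot r
  rw [hre]
  set K : ℂ := ∫ u, exp (-u ^ 2) • u • rotatingDyson n (r * u)
  have hconj : (2 * (1 + r ^ 4) : ℝ) * K =
      (r * gaussianAverage (evenDyson chirp 0 n) r : ℝ) * (1 - (r ^ 2 : ℝ) * Complex.I) := by
    rw [← hmul]
    push_cast
    linear_combination 2 * r ^ 4 * K * Complex.I_sq
  have hK := congrArg Complex.re hconj
  rw [Complex.re_ofReal_mul, Complex.re_ofReal_mul, Complex.sub_re, Complex.re_ofReal_mul,
    Complex.I_re, mul_zero, sub_zero, Complex.one_re, mul_one] at hK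
  rw [div_mul_eq_mul_div, eq_div_iff (by positivity), mul_comm, hK]

theorem gaussianAverage_evenDyson_chirp (n : ℕ) (r : ℝ) :
    gaussianAverage (evenDyson chirp 0 n) r = √π * ((arctan (r ^ 2) / 4) ^ n / n.factorial) := by
  induction n generalizing r with
  | zero =>
    simpa [gaussianAverage, evenDyson_zero] using integral_gaussian 1
  | succ n ih =>
    set F : ℝ → ℝ := fun r => √π * ((arctan (r ^ 2) / 4) ^ (n + 1) / (n + 1).factorial)
    have hF (r : ℝ) : HasDerivAt F
        (r / (2 * (1 + r ^ 4)) * gaussianAverage (evenDyson chirp 0 n) r) r := by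
      refine (((((hasDerivAt_pow 2 r).arctan.div_const 4).pow (n + 1)).div_const _).const_mul
        √π).congr_deriv ?_
      rw [ih, Nat.factorial_succ]
      push_cast
      field_simp
      ring
    have hG := hasDerivAt_gaussianAverage_evenDyson_chirp_succ n
    refine isOpen_univ.eqOn_of_deriv_eq isPreconnected_univ
      (fun r _ => (hG r).differentiableAt.differentiableWithinAt)
      (fun r _ => (hF r).differentiableAt.differentiableWithinAt)
      (fun r _ => (hG r).deriv.trans (hF r).deriv.symm) (Set.mem_univ 0) ?_ (Set.mem_univ r)
    simp [F, gaussianAverage, evenDyson_succ_self]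

theorem tendsto_evenDyson_chirp (n : ℕ) :
    Tendsto (evenDyson chirp 0 n) atTop (𝓝 ((π / 8) ^ n / n.factorial)) := by
  obtain ⟨L, hL⟩ := exists_tendsto_evenDyson_chirp n
  have harctan : Tendsto (fun r : ℝ => arctan (r ^ 2)) atTop (𝓝 (π / 2)) :=
    (tendsto_arctan_atTop.mono_right nhdsWithin_le_nhds).comp (tendsto_pow_atTop two_ne_zero)
  have havg : Tendsto (gaussianAverage (evenDyson chirp 0 n)) atTop
      (𝓝 (√π * ((π / 2 / 4) ^ n / n.factorial))) := by
    rw [funext (gaussianAverage_evenDyson_chirp n)]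
    exact (((harctan.div_const 4).pow n).div_const _).const_mul √π
  have hL_eq : L = (π / 2 / 4) ^ n / n.factorial :=
    mul_left_cancel₀ (sqrt_pos.2 pi_pos).ne' (tendsto_nhds_unique
      (tendsto_gaussianAverage (continuous_evenDyson continuous_chirp 0 n) hL) havg)
  convert hL.mono_left atTop_le_cocompact using 2
  rw [hL_eq]
  ring

theorem sum_antidiagonal_pow_div_factorial_mul {K : Type*} [Field K] [CharZero K] (x y : K)
    (n : ℕ) :
    ∑ p ∈ antidiagonal n, x ^ p.1 / p.1.factorial * (y ^ p.2 / p.2.factorial) =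
      (x + y) ^ n / n.factorial := by
  rw [(Commute.all x y).add_pow', Finset.sum_div]
  refine Finset.sum_congr rfl fun p hp => ?_
  rw [← Finset.HasAntidiagonal.mem_antidiagonal.1 hp, nsmul_eq_mul, Nat.cast_add_choose]
  have hfact : ((p.1 + p.2).factorial : K) ≠ 0 := Nat.cast_ne_zero.2 (Nat.factorial_ne_zero _)
  field_simp

theorem tendsto_evenDyson_chirp_neg_succ (n : ℕ) :
    Tendsto (fun T => evenDyson chirp (-T) (n + 1) T) atTop
      (𝓝 (2 / (n + 1).factorial * (π / 4) ^ (n + 1))) := by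
  simp only [evenDyson_neg_succ continuous_chirp even_chirp]
  convert (tendsto_finsetSum _ fun p (_ : p ∈ antidiagonal (n + 1)) =>
    (tendsto_evenDyson_chirp p.1).mul (tendsto_evenDyson_chirp p.2)).const_mul 2 using 2
  rw [sum_antidiagonal_pow_div_factorial_mul]
  ring

end Limit

section Simplex

/-- The points of `ℝᵐ` with `t ≥ s₀ ≥ s₁ ≥ ⋯ ≥ sₘ₋₁ ≥ a`. -/
def orderedSimplex (m : ℕ) (a t : ℝ) : Set (Fin m → ℝ) :=
  {s | (∀ i j, i ≤ j → s j ≤ s i) ∧ ∀ i, a ≤ s i ∧ s i ≤ t}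

theorem isCompact_orderedSimplex (m : ℕ) (a t : ℝ) : IsCompact (orderedSimplex m a t) := by
  have hIcc : orderedSimplex m a t = {s | Antitone s} ∩ Set.Icc (fun _ => a) (fun _ => t) :=
    Set.ext fun s => and_congr .rfl forall_and
  rw [hIcc]
  exact isCompact_Icc.inter_left isClosed_antitone

theorem cons_mem_orderedSimplex {m : ℕ} {a t u : ℝ} {s : Fin m → ℝ} :
    (Fin.cons u s : Fin (m + 1) → ℝ) ∈ orderedSimplex (m + 1) a t ↔
      u ∈ Set.Icc a t ∧ s ∈ orderedSimplex m a u := by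
  simp only [orderedSimplex, Set.mem_ofPred_eq, Fin.forall_fin_succ, Fin.cons_zero, Fin.cons_succ,
    Fin.succ_le_succ_iff, Set.mem_Icc]
  constructor
  · rintro ⟨⟨⟨-, hle⟩, hanti⟩, hu, hs⟩
    exact ⟨hu, fun i => (hanti i).2, fun i => ⟨(hs i).1, hle i (Fin.zero_le _)⟩⟩
  · rintro ⟨hu, hanti, hs⟩
    exact ⟨⟨⟨fun _ => le_rfl, fun i _ => (hs i).2⟩,
      fun i => ⟨fun h => absurd h (by simp), hanti i⟩⟩,
      hu, fun i => ⟨(hs i).1, (hs i).2.trans hu.2⟩⟩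

theorem setIntegral_eq_setIntegral_cons {m : ℕ} {E : Type*} [NormedAddCommGroup E]
    [NormedSpace ℝ E] {S : Set (Fin (m + 1) → ℝ)} {I : Set ℝ} {S' : ℝ → Set (Fin m → ℝ)}
    (hS : MeasurableSet S) (hI : MeasurableSet I) (hS' : ∀ u, MeasurableSet (S' u))
    (hmem : ∀ u s, (Fin.cons u s : Fin (m + 1) → ℝ) ∈ S ↔ u ∈ I ∧ s ∈ S' u)
    {F : (Fin (m + 1) → ℝ) → E} (hF : IntegrableOn F S) :
    ∫ s in S, F s = ∫ u in I, ∫ s in S' u, F (Fin.cons u s) := by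
  have hcons (p : ℝ × (Fin m → ℝ)) :
      (MeasurableEquiv.piFinSuccAbove (fun _ => ℝ) 0).symm p = Fin.cons p.1 p.2 := by
    simp [MeasurableEquiv.piFinSuccAbove_symm_apply, Fin.insertNthEquiv]
  have hmp := (volume_preserving_piFinSuccAbove (fun _ : Fin (m + 1) => ℝ) 0).symm
  have hint := (hmp.integrable_comp_emb (MeasurableEquiv.measurableEmbedding _)).2
    (hF.integrable_indicator hS)
  rw [← integral_indicator hS, ← hmp.integral_comp (MeasurableEquiv.measurableEmbedding _)]
  refine (integral_prod _ hint).trans ?_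
  rw [← integral_indicator hI]
  refine integral_congr_ae (ae_of_all _ fun u => ?_)
  simp only [Function.comp_apply, hcons]
  by_cases hu : u ∈ I
  · rw [Set.indicator_of_mem hu, ← integral_indicator (hS' u)]
    refine integral_congr_ae (ae_of_all _ fun s => ?_)
    by_cases hs : s ∈ S' u <;> simp [Set.indicator, hmem, hu, hs]
  · simp only [Set.indicator, hmem, hu, false_and, if_false, integral_zero]

theorem setIntegral_orderedSimplex_succ {E : Type*} [NormedAddCommGroup E] [NormedSpace ℝ E]
    {m : ℕ} {a t : ℝ} (hat : a ≤ t) {F : (Fin (m + 1) → ℝ) → E} (hF : Continuous F) :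
    ∫ s in orderedSimplex (m + 1) a t, F s =
      ∫ u in a..t, ∫ s in orderedSimplex m a u, F (Fin.cons u s) := by
  have hmeas (k : ℕ) (u : ℝ) : MeasurableSet (orderedSimplex k a u) :=
    (isCompact_orderedSimplex k a u).measurableSet
  rw [intervalIntegral.integral_of_le hat, ← integral_Icc_eq_integral_Ioc]
  exact setIntegral_eq_setIntegral_cons (hmeas _ _) measurableSet_Icc (hmeas m)
    (fun _ _ => cons_mem_orderedSimplex)
    (hF.continuousOn.integrableOn_compact (isCompact_orderedSimplex _ _ _))

theorem two_mul_val_lt {n : ℕ} (k : Fin n) : 2 * k.1 < 2 * n := by omega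

theorem two_mul_val_add_one_lt {n : ℕ} (k : Fin n) : 2 * k.1 + 1 < 2 * n := by omega

/-- The function `∏ₖ K(s₂ₖ, s₂ₖ₊₁)` of `2n` variables, where `0 ≤ k < n`. -/
def pairProd (K : ℝ → ℝ → ℝ) (n : ℕ) (s : Fin (2 * n) → ℝ) : ℝ :=
  ∏ k : Fin n, K (s ⟨2 * k.1, two_mul_val_lt k⟩) (s ⟨2 * k.1 + 1, two_mul_val_add_one_lt k⟩)

theorem continuous_pairProd {K : ℝ → ℝ → ℝ} (hK : Continuous (Function.uncurry K)) (n : ℕ) :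
    Continuous (pairProd K n) := by
  unfold pairProd
  fun_prop

theorem pairProd_cons_cons (K : ℝ → ℝ → ℝ) (n : ℕ) (u v : ℝ) (s : Fin (2 * n) → ℝ) :
    pairProd K (n + 1) (Fin.cons u (Fin.cons v s : Fin (2 * n + 1) → ℝ)) = K u v * pairProd K n s :=
  Fin.prod_univ_succ _

theorem setIntegral_pairProd_succ {K : ℝ → ℝ → ℝ} (hK : Continuous (Function.uncurry K)) (n : ℕ)
    {a t : ℝ} (hat : a ≤ t) :
    ∫ s in orderedSimplex (2 * (n + 1)) a t, pairProd K (n + 1) s =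
      ∫ u in a..t, ∫ v in a..u, K u v * ∫ s in orderedSimplex (2 * n) a v, pairProd K n s := by
  have hcont := continuous_pairProd hK (n + 1)
  refine (setIntegral_orderedSimplex_succ (m := 2 * n + 1) hat hcont).trans
    (intervalIntegral.integral_congr fun u hu => ?_)
  rw [Set.uIcc_of_le hat] at hu
  refine (setIntegral_orderedSimplex_succ hu.1 (hcont.comp (by fun_prop))).trans
    (intervalIntegral.integral_congr fun v _ => ?_)
  simp only [Function.comp_apply, pairProd_cons_cons, integral_const_mul]

theorem setIntegral_pairProd_inner {E : Type*} [NormedAddCommGroup E] [InnerProductSpace ℝ E]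
    [CompleteSpace E] {e : ℝ → E} (he : Continuous e) (n : ℕ) {a t : ℝ} (hat : a ≤ t) :
    ∫ s in orderedSimplex (2 * n) a t, pairProd (fun u v => ⟪e u, e v⟫_ℝ) n s =
      evenDyson e a n t := by
  induction n generalizing t with
  | zero =>
    have huniv : orderedSimplex (2 * 0) a t = Set.univ :=
      Set.eq_univ_of_forall fun s => ⟨fun i => i.elim0, fun i => i.elim0⟩
    simp [huniv, pairProd, evenDyson_zero, volume_pi, measureReal_def]
  | succ n ih =>
    rw [setIntegral_pairProd_succ (by fun_prop) n hat, evenDyson_succ]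
    refine intervalIntegral.integral_congr fun u hu => ?_
    rw [Set.uIcc_of_le hat] at hu
    have hint : IntervalIntegrable (fun v => evenDyson e a n v • e v) volume a u :=
      ((continuous_evenDyson he a n).smul he).intervalIntegrable _ _
    refine (intervalIntegral.integral_congr fun v hv => ?_).trans
      ((innerSL ℝ (e u)).intervalIntegral_comp_comm hint)
    rw [Set.uIcc_of_le hu.1] at hv
    rw [ih hv.1, innerSL_apply_apply, real_inner_smul_right, mul_comm]

end Simplex

/-- For every positive integer `n`, the iterated improper integral
`I_n = ∫_{-∞}^{∞} ds₁ ∫_{-∞}^{s₁} ds₂ ⋯ ∫_{-∞}^{s_{2n-1}} ds_{2n}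
  cos(s₁² − s₂²)·cos(s₃² − s₄²) ⋯ cos(s_{2n-1}² − s_{2n}²)`,
understood as the limit as `T → ∞` of the integral over the simplex
`{(s₁,…,s_{2n}) : −T ≤ s_{2n} ≤ ⋯ ≤ s₁ ≤ T}` of
`∏_{k=1}^{n} cos(s_{2k−1}² − s_{2k}²)`, converges and equals `(2/n!)·(π/4)ⁿ`. -/
theorem In_eq (n : ℕ) (hn : 0 < n) :
    Tendsto (fun T : ℝ =>
        ∫ s in {s : Fin (2 * n) → ℝ |
            (∀ i j : Fin (2 * n), i ≤ j → s j ≤ s i) ∧ ∀ i, -T ≤ s i ∧ s i ≤ T},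
          ∏ k : Fin n,
            Real.cos ((s ⟨2 * k.1, by have := k.isLt; omega⟩) ^ 2 -
              (s ⟨2 * k.1 + 1, by have := k.isLt; omega⟩) ^ 2))
      atTop (𝓝 (2 / n.factorial * (π / 4) ^ n)) := by
  obtain ⟨m, rfl⟩ := Nat.exists_eq_add_one.2 hn
  refine (tendsto_evenDyson_chirp_neg_succ m).congr' ?_
  filter_upwards [eventually_ge_atTop 0] with T hT
  rw [← setIntegral_pairProd_inner continuous_chirp (m + 1) (neg_le_self hT)]
  simp only [inner_chirp_chirp]
  rfl
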